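/- arXiv:math/0612123 — 2 statements merged into one kernel-verified Lean document; each statement's English description precedes it below -/
import Mathlib

section
/- For every ε > 0, the function v_ε is differentiable on ℝ² with gradient ∇v_ε(x) = −4x/(ε² + |x|²), and for every r₀ > 0 the integral ∫_{B(0,r₀)} |∇v_ε(x)|² dx equals 16π [ ln((ε² + r₀²)/ε²) + ε²/(ε² + r₀²) − 1 ]. In particular, ∫_{B(0,r₀)} |∇v_ε|² dx = 32π ln(1/ε) + O(1) as ε → 0⁺. -/
open Real MeasureTheory

/-!
The function `v_ε` depends on `s = |x|²` only, through `log (ε² / (ε² + s)²)`, so the chain rule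
gives its gradient, and polar coordinates turn the energy over a disc of radius `r` into
`32 π ∫₀ʳ t³ / (ε² + t²)² dt`. Since `t³ = t (ε² + t²) - ε² t`, an antiderivative of the integrand
is `(log (ε² + t²) + ε² / (ε² + t²)) / 2`. In the resulting closed form the only term that is
singular at `ε = 0` is `-16 π log ε²`; what remains after removing it converges.
-/

section Gradient

variable {E : Type*} [NormedAddCommGroup E] [InnerProductSpace ℝ E] [CompleteSpace E]

theorem hasGradientAt_comp_norm_sq {f : ℝ → ℝ} {f' : ℝ} {x : E} (hf : HasDerivAt f f' (‖x‖ ^ 2)) :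
    HasGradientAt (fun y : E => f (‖y‖ ^ 2)) ((2 * f') • x) x := by
  rw [hasGradientAt_iff_hasFDerivAt]
  refine (hf.comp_hasFDerivAt x (hasStrictFDerivAt_norm_sq x).hasFDerivAt).congr_fderiv ?_
  ext y
  simp only [smul_apply, coe_innerSL_apply, nsmul_eq_mul, Nat.cast_ofNat,
    smul_eq_mul, map_smul, InnerProductSpace.toDual_apply_apply]
  ring

theorem hasDerivAt_log_div_add_sq {a b s : ℝ} (hb : b ≠ 0) (hs : a + s ≠ 0) :
    HasDerivAt (fun s => log (b / (a + s) ^ 2)) (-2 / (a + s)) s := by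
  have hadd : HasDerivAt (fun s => a + s) 1 s := (hasDerivAt_id s).const_add a
  have hdiv := (hasDerivAt_const s b).fun_div (hadd.fun_pow 2) (pow_ne_zero 2 hs)
  refine (hdiv.log (div_ne_zero hb (pow_ne_zero 2 hs))).congr_deriv ?_
  field_simp
  ring

end Gradient

section Integral

open Metric Module Set

theorem setIntegral_ball_fun_norm_addHaar {E F : Type*} [NormedAddCommGroup E] [NormedSpace ℝ E]
    [Nontrivial E] [FiniteDimensional ℝ E] [MeasurableSpace E] [BorelSpace E]
    [NormedAddCommGroup F] [NormedSpace ℝ F] (μ : Measure E) [μ.IsAddHaarMeasure]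
    (f : ℝ → F) (r : ℝ) :
    ∫ x in ball (0 : E) r, f ‖x‖ ∂μ =
      finrank ℝ E • μ.real (ball 0 1) • ∫ t in Ioo 0 r, t ^ (finrank ℝ E - 1) • f t := by
  have hball : (ball (0 : E) r).indicator (fun x => f ‖x‖) = fun x => (Iio r).indicator f ‖x‖ := by
    ext x
    simp [indicator]
  rw [← integral_indicator measurableSet_ball, hball, integral_fun_norm_addHaar]
  simp only [← indicator_smul_apply (Iio r) (fun t => t ^ (finrank ℝ E - 1)) f]
  rw [setIntegral_indicator measurableSet_Iio, Ioi_inter_Iio]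

theorem setIntegral_ball_fun_norm_fin_two {F : Type*} [NormedAddCommGroup F] [NormedSpace ℝ F]
    (f : ℝ → F) {r : ℝ} (hr : 0 ≤ r) :
    ∫ x in ball (0 : EuclideanSpace ℝ (Fin 2)) r, f ‖x‖ = (2 * π) • ∫ t in 0..r, t • f t := by
  have hvol : volume.real (ball (0 : EuclideanSpace ℝ (Fin 2)) 1) = π := by
    simp [Measure.real, pi_nonneg]
  rw [setIntegral_ball_fun_norm_addHaar, hvol, finrank_euclideanSpace_fin,
    intervalIntegral.integral_of_le hr, integral_Ioc_eq_integral_Ioo, ← Nat.cast_smul_eq_nsmul ℝ,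
    smul_smul]
  simp only [Nat.cast_ofNat, Nat.add_one_sub_one, pow_one]

theorem hasDerivAt_log_add_sq_add_div {a t : ℝ} (h : a + t ^ 2 ≠ 0) :
    HasDerivAt (fun t => (log (a + t ^ 2) + a / (a + t ^ 2)) / 2) (t ^ 3 / (a + t ^ 2) ^ 2) t := by
  have hsq : HasDerivAt (fun t : ℝ => a + t ^ 2) (2 * t) t := by
    simpa using (hasDerivAt_pow 2 t).const_add a
  refine (((hsq.log h).fun_add ((hasDerivAt_const t a).fun_div hsq h)).div_const 2).congr_deriv ?_
  field_simp
  ring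

theorem integral_cube_div_add_sq_sq {a : ℝ} (ha : 0 < a) (r : ℝ) :
    ∫ t in 0..r, t ^ 3 / (a + t ^ 2) ^ 2 = (log ((a + r ^ 2) / a) + a / (a + r ^ 2) - 1) / 2 := by
  have hne (t : ℝ) : a + t ^ 2 ≠ 0 := by positivity
  have hcont : Continuous fun t : ℝ => t ^ 3 / (a + t ^ 2) ^ 2 :=
    (continuous_pow 3).div (by fun_prop) fun t => pow_ne_zero 2 (hne t)
  rw [intervalIntegral.integral_eq_sub_of_hasDerivAt
      (fun t _ => hasDerivAt_log_add_sq_add_div (hne t)) (hcont.intervalIntegrable 0 r),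
    log_div (hne r) ha.ne', zero_pow two_ne_zero, add_zero, div_self ha.ne']
  ring

end Integral

section Bounded

open Filter Set
open scoped Topology

theorem exists_forall_Ioo_norm_le_of_tendsto_nhdsGT {F : Type*} [NormedAddCommGroup F] {f : ℝ → F}
    {a : ℝ} {c : F} (hf : Tendsto f (𝓝[>] a) (𝓝 c)) :
    ∃ C > 0, ∃ b > a, ∀ t ∈ Ioo a b, ‖f t‖ ≤ C := by
  obtain ⟨C, hC, hfC⟩ := (hf.isBigO_one ℝ).exists_pos
  obtain ⟨b, hab, hb⟩ := mem_nhdsGT_iff_exists_Ioo_subset.mp hfC.bound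
  exact ⟨C, hC, b, hab, fun t ht => by simpa using hb ht⟩

end Bounded

section Bubble

open Filter Metric
open scoped Gradient Topology

/-- The function `v_ε(x) = log (ε² / (ε² + |x|²)²)`, the profile whose energy
concentrates at the origin as `ε → 0`, defined on any normed group. -/
noncomputable def bubble {E : Type*} [NormedAddCommGroup E] (ε : ℝ) (x : E) : ℝ :=
  log (ε ^ 2 / (ε ^ 2 + ‖x‖ ^ 2) ^ 2)

variable {E : Type*} [NormedAddCommGroup E] [InnerProductSpace ℝ E] [CompleteSpace E] {ε r : ℝ}

theorem hasGradientAt_bubble (hε : ε ≠ 0) (x : E) :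
    HasGradientAt (bubble ε) ((-4 / (ε ^ 2 + ‖x‖ ^ 2)) • x) x := by
  have hderiv := hasDerivAt_log_div_add_sq (s := ‖x‖ ^ 2) (pow_ne_zero 2 hε)
    (by positivity : ε ^ 2 + ‖x‖ ^ 2 ≠ 0)
  rw [show -4 / (ε ^ 2 + ‖x‖ ^ 2) = 2 * (-2 / (ε ^ 2 + ‖x‖ ^ 2)) by ring]
  exact hasGradientAt_comp_norm_sq hderiv

theorem gradient_bubble (hε : ε ≠ 0) (x : E) :
    ∇ (bubble ε) x = (-4 / (ε ^ 2 + ‖x‖ ^ 2)) • x :=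
  (hasGradientAt_bubble hε x).gradient

theorem norm_gradient_bubble_sq (hε : ε ≠ 0) (x : E) :
    ‖∇ (bubble ε) x‖ ^ 2 = 16 * (‖x‖ ^ 2 / (ε ^ 2 + ‖x‖ ^ 2) ^ 2) := by
  rw [gradient_bubble hε, norm_smul, mul_pow, norm_eq_abs, sq_abs, div_pow]
  ring

theorem setIntegral_ball_norm_gradient_bubble_sq (hε : ε ≠ 0) (hr : 0 ≤ r) :
    ∫ x in ball (0 : EuclideanSpace ℝ (Fin 2)) r, ‖∇ (bubble ε) x‖ ^ 2 =
      16 * π * (log ((ε ^ 2 + r ^ 2) / ε ^ 2) + ε ^ 2 / (ε ^ 2 + r ^ 2) - 1) := by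
  calc
    _ = ∫ x in ball (0 : EuclideanSpace ℝ (Fin 2)) r,
          16 * (‖x‖ ^ 2 / (ε ^ 2 + ‖x‖ ^ 2) ^ 2) := by
      simp only [norm_gradient_bubble_sq hε]
    _ = 2 * π * ∫ t in 0..r, t * (16 * (t ^ 2 / (ε ^ 2 + t ^ 2) ^ 2)) :=
      setIntegral_ball_fun_norm_fin_two (fun t => 16 * (t ^ 2 / (ε ^ 2 + t ^ 2) ^ 2)) hr
    _ = 2 * π * ∫ t in 0..r, 16 * (t ^ 3 / (ε ^ 2 + t ^ 2) ^ 2) := by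
      congr! 3
      ring
    _ = _ := by
      rw [intervalIntegral.integral_const_mul, integral_cube_div_add_sq_sq (by positivity)]
      ring

theorem setIntegral_ball_norm_gradient_bubble_sq_sub_log (hε : ε ≠ 0) (hr : 0 ≤ r) :
    (∫ x in ball (0 : EuclideanSpace ℝ (Fin 2)) r, ‖∇ (bubble ε) x‖ ^ 2) - 32 * π * log (1 / ε) =
      16 * π * (log (ε ^ 2 + r ^ 2) + ε ^ 2 / (ε ^ 2 + r ^ 2) - 1) := by
  rw [setIntegral_ball_norm_gradient_bubble_sq hε hr, log_div (by positivity) (by positivity),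
    log_pow, one_div, log_inv]
  push_cast
  ring

theorem tendsto_setIntegral_ball_norm_gradient_bubble_sq_sub_log (hr : 0 < r) :
    Tendsto (fun ε => (∫ x in ball (0 : EuclideanSpace ℝ (Fin 2)) r, ‖∇ (bubble ε) x‖ ^ 2) -
      32 * π * log (1 / ε)) (𝓝[≠] 0) (𝓝 (16 * π * (log (r ^ 2) - 1))) := by
  have hne (ε : ℝ) : ε ^ 2 + r ^ 2 ≠ 0 := by positivity
  have hcont : Continuous fun ε : ℝ =>
      16 * π * (log (ε ^ 2 + r ^ 2) + ε ^ 2 / (ε ^ 2 + r ^ 2) - 1) := by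
    fun_prop (disch := assumption)
  have hlim := (hcont.tendsto 0).mono_left (nhdsWithin_le_nhds (s := {0}ᶜ))
  simp only [zero_pow two_ne_zero, zero_add, zero_div, add_zero] at hlim
  refine hlim.congr' ?_
  filter_upwards [self_mem_nhdsWithin] with ε hε
  exact (setIntegral_ball_norm_gradient_bubble_sq_sub_log hε hr.le).symm

end Bubble

/-- For `ε > 0`, `v_ε(x) = ln(ε²/(ε² + |x|²)²)` on `ℝ²` is differentiable with gradient
`∇v_ε(x) = −4x/(ε² + |x|²)`; for every `r₀ > 0`,
`∫_{B(0,r₀)} |∇v_ε|² dx = 16π [ ln((ε² + r₀²)/ε²) + ε²/(ε² + r₀²) − 1 ]`,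
and in particular `∫_{B(0,r₀)} |∇v_ε|² dx = 32π ln(1/ε) + O(1)` as `ε → 0⁺`. -/
theorem stmt_1 :
    (∀ ε : ℝ, 0 < ε → ∀ x : EuclideanSpace ℝ (Fin 2),
      HasGradientAt (fun y : EuclideanSpace ℝ (Fin 2) =>
          Real.log (ε ^ 2 / (ε ^ 2 + ‖y‖ ^ 2) ^ 2))
        ((-4 / (ε ^ 2 + ‖x‖ ^ 2)) • x) x) ∧
    (∀ ε : ℝ, 0 < ε → ∀ r₀ : ℝ, 0 < r₀ →
      ∫ x in Metric.ball (0 : EuclideanSpace ℝ (Fin 2)) r₀,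
          ‖(-4 / (ε ^ 2 + ‖x‖ ^ 2)) • x‖ ^ 2 ∂volume =
        16 * π * (Real.log ((ε ^ 2 + r₀ ^ 2) / ε ^ 2) + ε ^ 2 / (ε ^ 2 + r₀ ^ 2) - 1)) ∧
    (∀ r₀ : ℝ, 0 < r₀ → ∃ C > (0:ℝ), ∃ δ > (0:ℝ), ∀ ε ∈ Set.Ioo (0:ℝ) δ,
      |(∫ x in Metric.ball (0 : EuclideanSpace ℝ (Fin 2)) r₀,
          ‖(-4 / (ε ^ 2 + ‖x‖ ^ 2)) • x‖ ^ 2 ∂volume) -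
        32 * π * Real.log (1 / ε)| ≤ C) := by
  refine ⟨fun ε hε x => hasGradientAt_bubble hε.ne' x, fun ε hε r₀ hr₀ => ?_, fun r₀ hr₀ => ?_⟩
  · simpa only [gradient_bubble hε.ne'] using
      setIntegral_ball_norm_gradient_bubble_sq hε.ne' hr₀.le
  · have hlim := (tendsto_setIntegral_ball_norm_gradient_bubble_sq_sub_log hr₀).mono_left
      (nhdsGT_le_nhdsNE 0)
    obtain ⟨C, hC, δ, hδ, hbound⟩ := exists_forall_Ioo_norm_le_of_tendsto_nhdsGT hlim
    refine ⟨C, hC, δ, hδ, fun ε hε => ?_⟩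
    simpa only [gradient_bubble hε.1.ne', norm_eq_abs] using hbound ε hε
end

section
/- Let E be a real Hilbert space and G : E → ℝ convex and continuously Fréchet differentiable, with G(0) = 0, G(u) + G(−u) ≥ 0 for all u ∈ E, and with the derivative dG mapping bounded subsets of E to bounded subsets of the dual E* (for instance, ‖dG(u)‖ ≤ C exp(a‖u‖²) for some constants C, a > 0). Fix λ₁, λ₂ > 0 and ū ∈ E; for ε ≥ 0 set I_ε(u) = ½‖u‖² − (λ₁ + ε) G(u) − (λ₂ + ε) G(−u), let Γ = { γ ∈ C([0,1], E) : γ(0) = 0, γ(1) = ū }, and c(ε) = inf_{γ ∈ Γ} max_{t} I_ε(γ(t)). Assume: (a) I_0(ū) < 0; (b) there exist ρ > 0 and η₀ > 0 with c(ε) ≥ ρ for all ε ∈ [0, η₀]; (c) there exists c' ∈ ℝ with c(ε) = c(0) + c' ε + o(ε) as ε → 0⁺. Then there exists a sequence (u_n) in E with sup_n ‖u_n‖ < ∞, I_0(u_n) → c(0), and ‖dI_0(u_n)‖_{E*} → 0; that is, I_0 admits a bounded Palais–Smale sequence at the mountain pass level c(0). -/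
open Real MeasureTheory Filter Asymptotics Topology

/-!
Convexity of `G` makes each `I_ε` an at most quadratic function above its tangents:
`I_ε (u + w) ≤ I_ε u + dI_ε(u) w + ½‖w‖²`. A path `γ` can therefore be pushed down in one step, by
a continuous selection `t ↦ w t` from the convex sets
`{w | I_ε (γ t) + dI_ε(γ t) w + ½‖w‖² < c(ε)}`. As no path stays below the level `c(ε)`, one of
these sets is empty, which says that `c(ε) ≤ I_ε u` and `‖dI_ε(u)‖² ≤ 2 (I_ε u - c(ε))` at the
corresponding point `u = γ t`.

If moreover `I_0 ≤ c(0) + ε` along `γ`, a one-sided bound `c(0) - c(ε) ≤ K ε` yields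
`G u + G (-u) ≤ K + 1` and `‖dI_ε(u)‖² ≤ 2 (K + 1) ε`. The first inequality bounds `u`, and
`ε → 0` gives the Palais–Smale sequence.
-/

section Convex

variable {E : Type*} [NormedAddCommGroup E] [NormedSpace ℝ E]

theorem add_apply_sub_le_of_convexOn {s : Set E} {f : E → ℝ} (hf : ConvexOn ℝ s f)
    {f' : E →L[ℝ] ℝ} {x y : E} (hx : x ∈ s) (hy : y ∈ s) (hf' : HasFDerivAt f f' x) :
    f x + f' (y - x) ≤ f y := by
  have hline : HasDerivAt (f ∘ AffineMap.lineMap x y) (f' (y - x)) (0 : ℝ) :=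
    HasFDerivAt.comp_hasDerivAt 0 (by simpa using hf') AffineMap.hasDerivAt_lineMap
  have hslope := (hf.comp_affineMap (AffineMap.lineMap x y)).le_slope_of_hasDerivAt
    (by simpa using hx) (by simpa using hy) zero_lt_one hline
  simp only [slope_def_field, Function.comp_apply, AffineMap.lineMap_apply_zero,
    AffineMap.lineMap_apply_one, sub_zero, div_one] at hslope
  linarith

theorem convexOn_apply_add_mul_norm_sq (D : E →L[ℝ] ℝ) {L : ℝ} (hL : 0 ≤ L) :
    ConvexOn ℝ Set.univ fun w => D w + L / 2 * ‖w‖ ^ 2 := by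
  have hsq : ConvexOn ℝ Set.univ fun w : E => ‖w‖ ^ 2 :=
    convexOn_univ_norm.pow (fun w _ => norm_nonneg w) 2
  exact (D.toLinearMap.convexOn convex_univ).add (hsq.smul (by positivity : 0 ≤ L / 2))

theorem norm_sq_le_of_forall_neg_le {D : E →L[ℝ] ℝ} {L r : ℝ} (hL : 0 ≤ L)
    (h : ∀ w, -r ≤ D w + L / 2 * ‖w‖ ^ 2) : ‖D‖ ^ 2 ≤ 2 * L * r := by
  have hr : 0 ≤ r := by simpa using h 0
  refine (Real.le_sqrt (norm_nonneg D) (by positivity)).1 ?_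
  refine D.opNorm_le_bound (Real.sqrt_nonneg _) fun v => ?_
  have hdiscrim : discrim (L / 2 * ‖v‖ ^ 2) (D v) r ≤ 0 := discrim_le_zero fun s => by
    have hsv := h (s • v)
    rw [map_smul, smul_eq_mul, norm_smul, mul_pow, Real.norm_eq_abs, sq_abs] at hsv
    linarith
  refine abs_le_of_sq_le_sq ?_ (by positivity)
  rw [mul_pow, Real.sq_sqrt (by positivity)]
  rw [discrim] at hdiscrim
  linarith

end Convex

section Minimax

variable {E : Type*} [NormedAddCommGroup E] [NormedSpace ℝ E]

theorem exists_norm_sq_le_of_forall_eqOn_exists_le {T : Type*} [TopologicalSpace T] [NormalSpace T]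
    [ParacompactSpace T] {S : Set T} (hS : IsClosed S) {F : E → ℝ} {F' : E → E →L[ℝ] ℝ}
    (hF : Continuous F) (hF' : Continuous F') {L : ℝ} (hL : 0 ≤ L)
    (hmajor : ∀ u w, F (u + w) ≤ F u + F' u w + L / 2 * ‖w‖ ^ 2) {c : ℝ} (γ : C(T, E))
    (hγS : ∀ t ∈ S, F (γ t) < c)
    (hc : ∀ γ' : C(T, E), Set.EqOn γ' γ S → ∃ t, c ≤ F (γ' t)) :
    ∃ t, c ≤ F (γ t) ∧ ‖F' (γ t)‖ ^ 2 ≤ 2 * L * (F (γ t) - c) := by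
  by_contra! hγ
  let W : T → Set E := fun t =>
    {w ∈ Set.univ | F' (γ t) w + L / 2 * ‖w‖ ^ 2 < c - F (γ t)} ∩ ⋂ _ : t ∈ S, {0}
  have hWconvex : ∀ t, Convex ℝ (W t) := fun t =>
    ((convexOn_apply_add_mul_norm_sq (F' (γ t)) hL).convex_lt _).inter
      (convex_iInter fun _ => convex_singleton 0)
  have hWlocal : ∀ t, ∃ w, ∀ᶠ t' in 𝓝 t, w ∈ W t' := fun t => by
    rcases lt_or_ge (F (γ t)) c with hlt | hge
    · refine ⟨0, ?_⟩
      filter_upwards [(hF.comp γ.continuous).continuousAt.eventually_lt_const hlt] with t' ht'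
      simpa [W] using ht'
    · obtain ⟨w, hw⟩ : ∃ w, F' (γ t) w + L / 2 * ‖w‖ ^ 2 < -(F (γ t) - c) := by
        by_contra! h
        exact (hγ t hge).not_ge (norm_sq_le_of_forall_neg_le hL h)
      have hcont : Continuous fun t' => F' (γ t') w + L / 2 * ‖w‖ ^ 2 + F (γ t') := by fun_prop
      refine ⟨w, ?_⟩
      filter_upwards [hcont.continuousAt.eventually_lt_const (by linarith : _ < c),
        hS.isOpen_compl.mem_nhds fun htS => (hγS t htS).not_ge hge] with t' hlow ht'
      exact ⟨⟨Set.mem_univ w, by linarith⟩, Set.mem_iInter.2 fun htS => absurd htS ht'⟩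
  obtain ⟨w, hw⟩ := exists_continuous_forall_mem_convex_of_local_const hWconvex hWlocal
  obtain ⟨t, ht⟩ := hc (γ + w) fun t ht => by
    simpa using Set.mem_iInter.1 (hw t).2 ht
  have hlow : F' (γ t) (w t) + L / 2 * ‖w t‖ ^ 2 < c - F (γ t) := (hw t).1.2
  have hle := hmajor (γ t) (w t)
  rw [ContinuousMap.add_apply] at ht
  linarith

end Minimax

section MountainPass

/-- The mountain pass level of `F` between `a` and `b`: the infimum, over the paths from `a` to `b`,
of the supremum of `F` along the path. If `F` is continuous and `X` path connected, neither takes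
the junk value `0`: the suprema are maxima, and they are bounded below by `F a`. -/
noncomputable def mountainPassLevel {X : Type*} [TopologicalSpace X] (F : X → ℝ) (a b : X) : ℝ :=
  ⨅ γ : Path a b, ⨆ t, F (γ t)

variable {X : Type*} [TopologicalSpace X] {F : X → ℝ} {a b : X}

theorem sInf_sSup_image_Icc_eq_mountainPassLevel :
    sInf ((fun γ : ℝ → X => sSup ((fun t => F (γ t)) '' Set.Icc (0 : ℝ) 1)) ''
        {γ : ℝ → X | ContinuousOn γ (Set.Icc 0 1) ∧ γ 0 = a ∧ γ 1 = b}) =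
      mountainPassLevel F a b := by
  rw [mountainPassLevel, ← sInf_range]
  congr 1
  ext r
  constructor
  · rintro ⟨γ, ⟨hγ, h0, h1⟩, rfl⟩
    exact ⟨⟨⟨Set.domRestrict (Set.Icc 0 1) γ, hγ.domRestrict⟩, h0, h1⟩,
      (sSup_image' (f := fun t => F (γ t))).symm⟩
  · rintro ⟨γ, rfl⟩
    refine ⟨γ.extend, ⟨γ.continuous_extend.continuousOn, γ.extend_zero, γ.extend_one⟩, ?_⟩
    simp only [sSup_image', Path.extend_extends']

theorem bddAbove_range_comp_path (hF : Continuous F) (γ : Path a b) :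
    BddAbove (Set.range fun t => F (γ t)) :=
  (isCompact_range (by fun_prop)).bddAbove

theorem exists_mountainPassLevel_le (hF : Continuous F) (γ : Path a b) :
    ∃ t, mountainPassLevel F a b ≤ F (γ t) := by
  have hbdd : BddBelow (Set.range fun γ : Path a b => ⨆ t, F (γ t)) := by
    refine ⟨F a, ?_⟩
    rintro _ ⟨γ', rfl⟩
    simpa using le_ciSup (bddAbove_range_comp_path hF γ') 0
  obtain ⟨t, ht⟩ := (isCompact_range (by fun_prop : Continuous fun t => F (γ t))).sSup_mem
    (Set.range_nonempty _)
  exact ⟨t, (ciInf_le hbdd γ).trans ht.ge⟩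

theorem exists_path_forall_lt [PathConnectedSpace X] (hF : Continuous F) {r : ℝ}
    (hr : mountainPassLevel F a b < r) : ∃ γ : Path a b, ∀ t, F (γ t) < r := by
  have : Nonempty (Path a b) := PathConnectedSpace.joined a b
  obtain ⟨γ, hγ⟩ := exists_lt_of_ciInf_lt hr
  exact ⟨γ, fun t => (le_ciSup (bddAbove_range_comp_path hF γ) t).trans_lt hγ⟩

end MountainPass

section MonotonicityTrick

variable {E : Type*} [NormedAddCommGroup E] [NormedSpace ℝ E] {F J : E → ℝ}
  {F' J' : E → E →L[ℝ] ℝ} {a b : E} {L K : ℝ}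

theorem exists_mountainPassLevel_le_and_norm_sq_le (hF : Continuous F) (hF' : Continuous F')
    (hL : 0 ≤ L) (hmajor : ∀ u w, F (u + w) ≤ F u + F' u w + L / 2 * ‖w‖ ^ 2)
    (ha : F a < mountainPassLevel F a b) (hb : F b < mountainPassLevel F a b) (γ : Path a b) :
    ∃ t, mountainPassLevel F a b ≤ F (γ t) ∧
      ‖F' (γ t)‖ ^ 2 ≤ 2 * L * (F (γ t) - mountainPassLevel F a b) := by
  refine exists_norm_sq_le_of_forall_eqOn_exists_le (S := {0, 1}) (Set.toFinite _).isClosed hF hF'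
    hL hmajor γ.toContinuousMap ?_ fun γ' hγ' => ?_
  · rintro t (rfl | rfl)
    · simpa using ha
    · simpa using hb
  · have h0 : γ' 0 = a := by simpa using hγ' (Set.mem_insert 0 {1})
    have h1 : γ' 1 = b := by simpa using hγ' (Set.mem_insert_of_mem 0 rfl)
    exact exists_mountainPassLevel_le hF (⟨γ', h0, h1⟩ : Path a b)

theorem sub_mul_add_le_of_convexOn (hmajor : ∀ u w, F (u + w) ≤ F u + F' u w + L / 2 * ‖w‖ ^ 2)
    (hJ : ConvexOn ℝ Set.univ J) (hJ' : ∀ u, HasFDerivAt J (J' u) u) {ε : ℝ} (hε : 0 ≤ ε)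
    (u w : E) :
    F (u + w) - ε * J (u + w) ≤ F u - ε * J u + (F' u - ε • J' u) w + L / 2 * ‖w‖ ^ 2 := by
  have htangent := add_apply_sub_le_of_convexOn hJ (Set.mem_univ u) (Set.mem_univ (u + w)) (hJ' u)
  rw [add_sub_cancel_left] at htangent
  have hscaled := mul_le_mul_of_nonneg_left htangent hε
  simp only [sub_apply, smul_apply, smul_eq_mul]
  linarith [hmajor u w]

theorem exists_le_and_norm_sub_smul_sq_le (hF : Continuous F) (hF' : Continuous F')
    (hL : 0 ≤ L) (hmajor : ∀ u w, F (u + w) ≤ F u + F' u w + L / 2 * ‖w‖ ^ 2)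
    (hJ : ConvexOn ℝ Set.univ J) (hJ' : ∀ u, HasFDerivAt J (J' u) u) (hJ'c : Continuous J')
    (hJ0 : ∀ u, 0 ≤ J u) {ε : ℝ} (hε : 0 < ε)
    (hK : mountainPassLevel F a b - mountainPassLevel (fun u => F u - ε * J u) a b ≤ K * ε)
    (ha : F a < mountainPassLevel F a b - K * ε) (hb : F b < mountainPassLevel F a b - K * ε) :
    ∃ u, J u ≤ K + 1 ∧ mountainPassLevel F a b - K * ε ≤ F u ∧ F u ≤ mountainPassLevel F a b + ε ∧
      ‖F' u - ε • J' u‖ ^ 2 ≤ 2 * L * ((K + 1) * ε) := by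
  have hJcont : Continuous J := continuous_iff_continuousAt.2 fun u => (hJ' u).continuousAt
  have hεJ : ∀ u, 0 ≤ ε * J u := fun u => mul_nonneg hε.le (hJ0 u)
  obtain ⟨γ, hγ⟩ := exists_path_forall_lt hF (lt_add_of_pos_right (mountainPassLevel F a b) hε)
  obtain ⟨t, hlevel, hnorm⟩ := exists_mountainPassLevel_le_and_norm_sq_le (a := a) (b := b)
    (F := fun u => F u - ε * J u) (F' := fun u => F' u - ε • J' u) (by fun_prop) (by fun_prop) hL
    (sub_mul_add_le_of_convexOn hmajor hJ hJ' hε.le) (by linarith [hεJ a]) (by linarith [hεJ b]) γ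
  have hF_le := (hγ t).le
  refine ⟨γ t, le_of_mul_le_mul_left (by linarith) hε, by linarith [hεJ (γ t)], hF_le,
    hnorm.trans ?_⟩
  gcongr
  linarith [hεJ (γ t)]

theorem norm_le_sqrt_add_of_norm_sub_smul_sq_le {D D₁ : E →L[ℝ] ℝ} {ε C r : ℝ} (hε : 0 ≤ ε)
    (hC : ‖D₁‖ ≤ C) (hD : ‖D - ε • D₁‖ ^ 2 ≤ r) : ‖D‖ ≤ √r + ε * C :=
  calc ‖D‖ ≤ ‖D - ε • D₁‖ + ‖ε • D₁‖ := norm_le_norm_sub_add _ _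
    _ ≤ √r + ε * C := by
      rw [norm_smul, Real.norm_of_nonneg hε]
      gcongr
      exact Real.le_sqrt_of_sq_le hD

theorem exists_bounded_palaisSmale_of_frequently (hF : ∀ u, HasFDerivAt F (F' u) u)
    (hF' : Continuous F') (hL : 0 ≤ L)
    (hmajor : ∀ u w, F (u + w) ≤ F u + F' u w + L / 2 * ‖w‖ ^ 2)
    (hJ : ConvexOn ℝ Set.univ J) (hJ' : ∀ u, HasFDerivAt J (J' u) u) (hJ'c : Continuous J')
    (hJ0 : ∀ u, 0 ≤ J u) (ha : F a < mountainPassLevel F a b) (hb : F b < mountainPassLevel F a b)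
    (hK : ∃ᶠ ε in 𝓝[>] 0,
      mountainPassLevel F a b - mountainPassLevel (fun u => F u - ε * J u) a b ≤ K * ε)
    (hbdd : Bornology.IsBounded {u | F u ≤ mountainPassLevel F a b + 1 ∧ J u ≤ K + 1})
    (hJ'bdd : Bornology.IsBounded
      (J' '' {u | F u ≤ mountainPassLevel F a b + 1 ∧ J u ≤ K + 1})) :
    ∃ u : ℕ → E, (∃ M : ℝ, ∀ n, ‖u n‖ ≤ M) ∧
      Tendsto (fun n => F (u n)) atTop (𝓝 (mountainPassLevel F a b)) ∧
      Tendsto (fun n => ‖fderiv ℝ F (u n)‖) atTop (𝓝 0) := by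
  set m := mountainPassLevel F a b
  have hFcont : Continuous F := continuous_iff_continuousAt.2 fun u => (hF u).continuousAt
  have hm : Tendsto (fun ε => m - K * ε) (𝓝[>] 0) (𝓝 m) :=
    ((by fun_prop : Continuous fun ε => m - K * ε).tendsto' 0 m (by simp)).mono_left
      nhdsWithin_le_nhds
  have hsmall : ∀ᶠ ε in 𝓝[>] (0 : ℝ), ε ∈ Set.Ioo 0 1 ∧ F a < m - K * ε ∧ F b < m - K * ε :=
    Eventually.and (Ioo_mem_nhdsGT one_pos)
      ((hm.eventually_const_lt ha).and (hm.eventually_const_lt hb))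
  obtain ⟨ε, hε, hεn⟩ := exists_seq_forall_of_frequently (hK.and_eventually hsmall)
  have hε0 : Tendsto ε atTop (𝓝 0) := hε.mono_right nhdsWithin_le_nhds
  choose u hJu hFlow hFup hnorm using fun n => exists_le_and_norm_sub_smul_sq_le hFcont hF' hL
    hmajor hJ hJ' hJ'c hJ0 (hεn n).2.1.1 (hεn n).1 (hεn n).2.2.1 (hεn n).2.2.2
  have hu : ∀ n, u n ∈ {u | F u ≤ m + 1 ∧ J u ≤ K + 1} := fun n =>
    ⟨(hFup n).trans (by linarith [(hεn n).2.1.2]), hJu n⟩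
  obtain ⟨M, hM⟩ := hbdd.exists_norm_le
  obtain ⟨C, hC⟩ := hJ'bdd.exists_norm_le
  refine ⟨u, ⟨M, fun n => hM _ (hu n)⟩, tendsto_of_tendsto_of_tendsto_of_le_of_le
    (hm.comp hε) ?_ hFlow hFup, squeeze_zero (g := fun n => √(2 * L * ((K + 1) * ε n)) + ε n * C)
    (fun n => norm_nonneg _) (fun n => ?_) ?_⟩
  · simpa using hε0.const_add m
  · rw [(hF (u n)).fderiv]
    exact norm_le_sqrt_add_of_norm_sub_smul_sq_le (hεn n).2.1.1.le
      (hC _ (Set.mem_image_of_mem J' (hu n))) (hnorm n)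
  · exact ((by fun_prop : Continuous fun ε => √(2 * L * ((K + 1) * ε)) + ε * C).tendsto' 0 0
      (by simp)).comp hε0

end MonotonicityTrick

section ReflectionSum

variable {E : Type*} [NormedAddCommGroup E] [NormedSpace ℝ E] {G : E → ℝ} {G' : E → E →L[ℝ] ℝ}
  {l₁ l₂ : ℝ}

/-- The combination `λ₁ G(u) + λ₂ G(-u)`. Subtracting it from `½‖u‖²` gives `I_0`, and its value at
`λ₁ = λ₂ = 1` is `-∂I_ε/∂ε`. -/
def reflectionSum (G : E → ℝ) (l₁ l₂ : ℝ) (u : E) : ℝ := l₁ * G u + l₂ * G (-u)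

theorem convexOn_reflectionSum (hG : ConvexOn ℝ Set.univ G) (hl₁ : 0 ≤ l₁) (hl₂ : 0 ≤ l₂) :
    ConvexOn ℝ Set.univ (reflectionSum G l₁ l₂) :=
  (hG.smul hl₁).add ((hG.comp_linearMap (-LinearMap.id)).smul hl₂)

theorem hasFDerivAt_reflectionSum (hG : ∀ u, HasFDerivAt G (G' u) u) (u : E) :
    HasFDerivAt (reflectionSum G l₁ l₂) (l₁ • G' u - l₂ • G' (-u)) u := by
  have hneg : HasFDerivAt (fun v => G (-v)) (-G' (-u)) u := by
    simpa [Function.comp_def] using (hG (-u)).comp u (hasFDerivAt_id u).neg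
  refine HasFDerivAt.congr_fderiv (((hG u).const_mul l₁).add (hneg.const_mul l₂)) ?_
  module

theorem neg_opNorm_mul_norm_le (hG : ConvexOn ℝ Set.univ G) (hG0 : G 0 = 0) {D : E →L[ℝ] ℝ}
    (hD : HasFDerivAt G D 0) (u : E) : -(‖D‖ * ‖u‖) ≤ G u := by
  have htangent := add_apply_sub_le_of_convexOn hG (Set.mem_univ 0) (Set.mem_univ u) hD
  rw [hG0, zero_add, sub_zero] at htangent
  exact (abs_le.1 (D.le_opNorm u)).1.trans htangent

theorem reflectionSum_one_one_nonneg (hG : ConvexOn ℝ Set.univ G) (hG0 : G 0 = 0) (u : E) :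
    0 ≤ reflectionSum G 1 1 u := by
  have hmid := hG.2 (Set.mem_univ u) (Set.mem_univ (-u)) (by norm_num : (0 : ℝ) ≤ 1 / 2)
    (by norm_num : (0 : ℝ) ≤ 1 / 2) (by norm_num)
  rw [smul_neg, add_neg_cancel, hG0, smul_eq_mul, smul_eq_mul] at hmid
  rw [reflectionSum]
  linarith

theorem isBounded_image_reflectionSum_deriv
    (hG' : ∀ s : Set E, Bornology.IsBounded s → Bornology.IsBounded (G' '' s)) {s : Set E}
    (hs : Bornology.IsBounded s) :
    Bornology.IsBounded ((fun u => l₁ • G' u - l₂ • G' (-u)) '' s) := by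
  have hneg : Bornology.IsBounded ((fun u => G' (-u)) '' s) := by
    simpa only [← Set.image_neg_eq_neg, Set.image_image] using hG' (-s) hs.neg
  refine (((hG' s hs).smul₀ l₁).sub (hneg.smul₀ l₂)).subset ?_
  rintro _ ⟨u, hu, rfl⟩
  exact Set.sub_mem_sub (Set.smul_mem_smul_set ⟨u, hu, rfl⟩) (Set.smul_mem_smul_set ⟨u, hu, rfl⟩)

theorem isBounded_setOf_half_norm_sq_sub_reflectionSum_le (hG : ConvexOn ℝ Set.univ G)
    (hG0 : G 0 = 0) {D : E →L[ℝ] ℝ} (hD : HasFDerivAt G D 0) (hl₁ : 0 ≤ l₁) (hl₂ : 0 ≤ l₂)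
    (A B : ℝ) : Bornology.IsBounded
      {u | 1 / 2 * ‖u‖ ^ 2 - reflectionSum G l₁ l₂ u ≤ A ∧ reflectionSum G 1 1 u ≤ B} := by
  set p := (l₁ + l₂) * ‖D‖
  set q := A + (l₁ + l₂) * B
  refine isBounded_iff_forall_norm_le.2 ⟨p + √(2 * q + p ^ 2), fun u ⟨hA, hB⟩ => ?_⟩
  rw [reflectionSum] at hA hB
  have hlow := neg_opNorm_mul_norm_le hG hG0 hD u
  have hlow_neg := neg_opNorm_mul_norm_le hG hG0 hD (-u)
  rw [norm_neg] at hlow_neg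
  have hup : l₁ * G u ≤ l₁ * (B + ‖D‖ * ‖u‖) := by gcongr; linarith
  have hup_neg : l₂ * G (-u) ≤ l₂ * (B + ‖D‖ * ‖u‖) := by gcongr; linarith
  have hquad : 1 / 2 * ‖u‖ ^ 2 ≤ q + p * ‖u‖ := by
    simp only [p, q]
    linarith
  have hsq : (‖u‖ - p) ^ 2 ≤ 2 * q + p ^ 2 := by linarith [hquad]
  linarith [Real.le_sqrt_of_sq_le hsq]

end ReflectionSum

section HalfNormSq

variable {E : Type*} [NormedAddCommGroup E] [InnerProductSpace ℝ E] {f : E → ℝ}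
  {f' : E →L[ℝ] ℝ} {u : E}

theorem hasFDerivAt_half_norm_sq_sub (hf : HasFDerivAt f f' u) :
    HasFDerivAt (fun v => 1 / 2 * ‖v‖ ^ 2 - f v) (innerSL ℝ u - f') u := by
  refine (((hasStrictFDerivAt_norm_sq u).hasFDerivAt.const_mul (1 / 2)).sub hf).congr_fderiv ?_
  module

theorem half_norm_sq_sub_add_le_of_convexOn (hf : ConvexOn ℝ Set.univ f)
    (hf' : HasFDerivAt f f' u) (w : E) :
    1 / 2 * ‖u + w‖ ^ 2 - f (u + w) ≤
      1 / 2 * ‖u‖ ^ 2 - f u + (innerSL ℝ u - f') w + 1 / 2 * ‖w‖ ^ 2 := by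
  have htangent := add_apply_sub_le_of_convexOn hf (Set.mem_univ u) (Set.mem_univ (u + w)) hf'
  rw [add_sub_cancel_left] at htangent
  rw [norm_add_sq_real, sub_apply, innerSL_apply_apply]
  linarith

end HalfNormSq

theorem eventually_sub_le_mul_of_isLittleO {c : ℝ → ℝ} {c' : ℝ}
    (hc : (fun ε => c ε - c 0 - c' * ε) =o[𝓝[>] 0] fun ε => ε) :
    ∀ᶠ ε in 𝓝[>] 0, c 0 - c ε ≤ (1 - c') * ε := by
  filter_upwards [hc.bound one_pos, self_mem_nhdsWithin] with ε hbound (hε : 0 < ε)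
  rw [one_mul, Real.norm_of_nonneg hε.le, Real.norm_eq_abs] at hbound
  linarith [(abs_le.1 hbound).1]

theorem stmt_14_general {E : Type*} [NormedAddCommGroup E] [InnerProductSpace ℝ E]
    (G : E → ℝ) (hGconv : ConvexOn ℝ Set.univ G)
    (G' : E → E →L[ℝ] ℝ) (hGdiff : ∀ u, HasFDerivAt G (G' u) u) (hGC1 : Continuous G')
    (hG0 : G 0 = 0)
    (hGbdd : ∀ s : Set E, Bornology.IsBounded s → Bornology.IsBounded (G' '' s))
    (l₁ l₂ : ℝ) (hl₁ : 0 ≤ l₁) (hl₂ : 0 ≤ l₂) (ubar : E)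
    (I : ℝ → E → ℝ)
    (hI : ∀ ε : ℝ, 0 ≤ ε → ∀ u : E,
      I ε u = (1 / 2) * ‖u‖ ^ 2 - (l₁ + ε) * G u - (l₂ + ε) * G (-u))
    (c : ℝ → ℝ) (hc : ∀ ε : ℝ, 0 ≤ ε → c ε = mountainPassLevel (I ε) 0 ubar)
    (hc0 : 0 < c 0) (ha : I 0 ubar < c 0)
    (K : ℝ) (hK : ∃ᶠ ε in 𝓝[>] 0, c 0 - c ε ≤ K * ε) :
    ∃ u : ℕ → E, (∃ M : ℝ, ∀ n, ‖u n‖ ≤ M) ∧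
      Tendsto (fun n => I 0 (u n)) atTop (𝓝 (c 0)) ∧
      Tendsto (fun n => ‖fderiv ℝ (I 0) (u n)‖) atTop (𝓝 0) := by
  let F := fun u => 1 / 2 * ‖u‖ ^ 2 - reflectionSum G l₁ l₂ u
  let J := reflectionSum G 1 1
  have hIε : ∀ ε, 0 ≤ ε → I ε = fun u => F u - ε * J u := fun ε hε => by
    funext u
    simp only [hI ε hε, F, J, reflectionSum]
    ring
  have hI0 : I 0 = F := by simpa using hIε 0 le_rfl
  have hgap : ∃ᶠ ε in 𝓝[>] 0, c 0 - mountainPassLevel (fun u => F u - ε * J u) 0 ubar ≤ K * ε :=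
    (hK.and_eventually self_mem_nhdsWithin).mono fun ε ⟨hle, (hε : 0 < ε)⟩ => by
      rwa [← hIε ε hε.le, ← hc ε hε.le]
  have hbdd := isBounded_setOf_half_norm_sq_sub_reflectionSum_le hGconv hG0 (hGdiff 0) hl₁ hl₂
    (c 0 + 1) (K + 1)
  have hF0 : F 0 < c 0 := by simpa [F, reflectionSum, hG0] using hc0
  have hF' := hasFDerivAt_reflectionSum (l₁ := l₁) (l₂ := l₂) hGdiff
  rw [hc 0 le_rfl, hI0] at ha hgap hbdd hF0 ⊢
  exact exists_bounded_palaisSmale_of_frequently (fun u => hasFDerivAt_half_norm_sq_sub (hF' u))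
    (by fun_prop) zero_le_one
    (fun u => half_norm_sq_sub_add_le_of_convexOn (convexOn_reflectionSum hGconv hl₁ hl₂) (hF' u))
    (convexOn_reflectionSum hGconv zero_le_one zero_le_one) (hasFDerivAt_reflectionSum hGdiff)
    (by fun_prop) (reflectionSum_one_one_nonneg hGconv hG0) hF0 ha hgap hbdd
    (isBounded_image_reflectionSum_deriv hGbdd hbdd)

/-- Struwe's monotonicity trick: existence of a bounded Palais–Smale sequence at the
mountain pass level. Let `E` be a real Hilbert space, `G : E → ℝ` convex and `C¹` with
`G(0) = 0`, `G(u) + G(−u) ≥ 0`, and derivative mapping bounded sets to bounded sets.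
Fix `λ₁, λ₂ > 0`, `ū ∈ E`, `I_ε(u) = ½‖u‖² − (λ₁+ε)G(u) − (λ₂+ε)G(−u)`, and `c(ε)` the
mountain pass value over paths from `0` to `ū`. Assume (a) `I_0(ū) < 0`; (b) `c(ε) ≥ ρ > 0`
for all `ε ∈ [0, η₀]`; (c) `c(ε) = c(0) + c'ε + o(ε)` as `ε → 0⁺`. Then `I_0` admits a
bounded Palais–Smale sequence at level `c(0)`. -/
theorem stmt_14 {E : Type*} [NormedAddCommGroup E] [InnerProductSpace ℝ E]
    [CompleteSpace E]
    (G : E → ℝ) (hGconv : ConvexOn ℝ Set.univ G)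
    (G' : E → E →L[ℝ] ℝ) (hGdiff : ∀ u, HasFDerivAt G (G' u) u) (hGC1 : Continuous G')
    (hG0 : G 0 = 0) (hGsym : ∀ u : E, 0 ≤ G u + G (-u))
    (hGbdd : ∀ s : Set E, Bornology.IsBounded s → Bornology.IsBounded (G' '' s))
    (l₁ l₂ : ℝ) (hl₁ : 0 < l₁) (hl₂ : 0 < l₂) (ubar : E)
    (I : ℝ → E → ℝ)
    (hI : ∀ ε : ℝ, 0 ≤ ε → ∀ u : E,
      I ε u = (1 / 2) * ‖u‖ ^ 2 - (l₁ + ε) * G u - (l₂ + ε) * G (-u))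
    (c : ℝ → ℝ)
    (hc : ∀ ε : ℝ, 0 ≤ ε → c ε =
      sInf ((fun γ : ℝ → E => sSup ((fun t => I ε (γ t)) '' Set.Icc (0:ℝ) 1)) ''
        {γ : ℝ → E | ContinuousOn γ (Set.Icc 0 1) ∧ γ 0 = 0 ∧ γ 1 = ubar}))
    (ha : I 0 ubar < 0)
    (ρ η₀ : ℝ) (hρ : 0 < ρ) (hη₀ : 0 < η₀) (hb : ∀ ε ∈ Set.Icc (0:ℝ) η₀, ρ ≤ c ε)
    (c' : ℝ)
    (hc' : (fun ε => c ε - c 0 - c' * ε) =o[nhdsWithin 0 (Set.Ioi 0)] fun ε => ε) :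
    ∃ u : ℕ → E, (∃ M : ℝ, ∀ n, ‖u n‖ ≤ M) ∧
      Tendsto (fun n => I 0 (u n)) atTop (𝓝 (c 0)) ∧
      Tendsto (fun n => ‖fderiv ℝ (I 0) (u n)‖) atTop (𝓝 0) := by
  have hc0 : 0 < c 0 := hρ.trans_le (hb 0 ⟨le_rfl, hη₀.le⟩)
  exact stmt_14_general G hGconv G' hGdiff hGC1 hG0 hGbdd l₁ l₂ hl₁.le hl₂.le ubar I hI c
    (fun ε hε => (hc ε hε).trans sInf_sSup_image_Icc_eq_mountainPassLevel) hc0 (ha.trans hc0)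
    (1 - c') (eventually_sub_le_mul_of_isLittleO hc').frequently
end
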